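/- arXiv:2001.04517 — 2 statements merged into one kernel-verified Lean document; each statement's English description precedes it below -/
import Mathlib

section
/- For every planar graph G and every ball hypergraph 𝓗 of G, the fractional matching number satisfies ν*(𝓗) ≤ 6e·ν(𝓗), where e is the base of the natural logarithm. -/
/-- The ball of radius `r` centered at `v` in the graph metric of `G`:
all vertices `u` with `d_G(v,u) ≤ r` (in particular, `u` must be reachable from `v`). -/
def SimpleGraph.gBall {V : Type*} (G : SimpleGraph V) (v : V) (r : ℕ) : Set V :=
  {u | G.Reachable v u ∧ G.dist v u ≤ r}

/-- A ball hypergraph of `G` is given by its edge set `E`: a collection of subsets of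
`V(G)`, each of which is a ball of `G`. -/
def IsBallHypergraph {V : Type*} (G : SimpleGraph V) (E : Set (Set V)) : Prop :=
  ∀ e ∈ E, ∃ v r, e = G.gBall v r

/-- `H` is a minor of `G`: there are pairwise disjoint connected nonempty branch sets
in `G`, one for each vertex of `H`, with an edge of `G` between the branch sets of any
two adjacent vertices of `H`. -/
def GraphMinor {W : Type*} {V : Type*} (H : SimpleGraph W) (G : SimpleGraph V) : Prop :=
  ∃ f : W → Set V,
    (∀ w, (G.induce (f w)).Connected) ∧
    (Pairwise fun w₁ w₂ => Disjoint (f w₁) (f w₂)) ∧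
    (∀ w₁ w₂, H.Adj w₁ w₂ → ∃ u ∈ f w₁, ∃ v ∈ f w₂, G.Adj u v)

/-- The matching number of the hypergraph with edge set `E`: the maximum number of
pairwise disjoint edges. -/
noncomputable def matchingNumber {V : Type*} [Fintype V] (E : Set (Set V)) : ℕ :=
  sSup {n | ∃ M : Finset (Set V), ↑M ⊆ E ∧ (M : Set (Set V)).Pairwise Disjoint ∧ M.card = n}

/-- The transversal number of the hypergraph with edge set `E`: the minimum size of a
set of vertices meeting every edge. -/
noncomputable def transversalNumber {V : Type*} [Fintype V] (E : Set (Set V)) : ℕ :=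
  sInf {n | ∃ T : Finset V, (∀ e ∈ E, ∃ v ∈ T, v ∈ e) ∧ T.card = n}


/-- A graph is planar iff it can be embedded in the plane without edge crossings;
by Wagner's theorem this holds if and only if it has neither a `K₅` minor nor a
`K₃,₃` minor, which we take as the (combinatorial) definition of planarity. -/
def IsPlanar {V : Type*} (G : SimpleGraph V) : Prop :=
  ¬ GraphMinor (⊤ : SimpleGraph (Fin 5)) G ∧
    ¬ GraphMinor (completeBipartiteGraph (Fin 3) (Fin 3)) G

/-- `w` is a fractional matching of the hypergraph with edge set `E`: nonnegative
weights on the edges (zero outside `E`) such that for every vertex, the total weight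
of the edges containing it is at most `1`. -/
def IsFractionalMatching {V : Type*} [Fintype V] (E : Set (Set V)) (w : Set V → ℝ) :
    Prop :=
  (∀ e, 0 ≤ w e) ∧ (∀ e, e ∉ E → w e = 0) ∧
    ∀ v : V, ∑ e : Set V, Set.indicator {e : Set V | v ∈ e} w e ≤ 1


/-- The graph `G` with `a` joined to all neighbours of `b`. -/
def SimpleGraph.joinNeighbors {V : Type*} (G : SimpleGraph V) (a b : V) : SimpleGraph V :=
  G ⊔ SimpleGraph.fromEdgeSet ((fun x => s(a, x)) '' G.neighborSet b)

namespace GraphMinor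

variable {U W V : Type*} {K : SimpleGraph U} {H H' : SimpleGraph W} {G : SimpleGraph V}

theorem connected_induce_singleton (v : V) : (G.induce ({v} : Set V)).Connected := by
  have : Nonempty ({v} : Set V) := ⟨⟨v, rfl⟩⟩
  exact ⟨fun x y => by rw [Subsingleton.elim x y]⟩

theorem mono_left (hle : H ≤ H') (h : GraphMinor H' G) : GraphMinor H G := by
  obtain ⟨f, hc, hd, ha⟩ := h
  exact ⟨f, hc, hd, fun w₁ w₂ hw => ha w₁ w₂ (hle hw)⟩

theorem refl (G : SimpleGraph V) : GraphMinor G G :=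
  ⟨fun v => {v}, fun v => connected_induce_singleton v,
    fun v w h => by simpa using h, fun v w h => ⟨v, rfl, w, rfl, h⟩⟩

theorem trans (h₁ : GraphMinor K H) (h₂ : GraphMinor H G) : GraphMinor K G := by
  obtain ⟨g, gc, gd, ga⟩ := h₁
  obtain ⟨f, fc, fd, fa⟩ := h₂
  have mem : ∀ {u w x}, w ∈ g u → x ∈ f w → x ∈ ⋃ w ∈ g u, f w := fun hw hx =>
    Set.mem_biUnion hw hx
  refine ⟨fun u => ⋃ w ∈ g u, f w, fun u => ?_, fun u₁ u₂ hu => ?_, fun u₁ u₂ hu => ?_⟩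
  · have inner : ∀ {w} (hw : w ∈ g u) {x y} (hx : x ∈ f w) (hy : y ∈ f w),
        (G.induce (⋃ w ∈ g u, f w)).Reachable ⟨x, mem hw hx⟩ ⟨y, mem hw hy⟩ := by
      intro w hw x y hx hy
      have hle : f w ≤ ⋃ w ∈ g u, f w := fun z hz => mem hw hz
      exact ((fc w).preconnected ⟨x, hx⟩ ⟨y, hy⟩).map (G.induceHomOfLE hle).toHom
    have key : ∀ {w w' : g u} (p : (H.induce (g u)).Walk w w') {x y} (hx : x ∈ f w)
        (hy : y ∈ f w'),
        (G.induce (⋃ w ∈ g u, f w)).Reachable ⟨x, mem w.2 hx⟩ ⟨y, mem w'.2 hy⟩ := by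
      intro w w' p
      induction p with
      | nil => exact fun hx hy => inner (Subtype.prop _) hx hy
      | @cons a b c hab p ih =>
        intro x y hx hy
        obtain ⟨s, hs, t, ht, hst⟩ := fa a b hab
        refine (inner a.2 hx hs).trans (SimpleGraph.Reachable.trans ?_ (ih ht hy))
        exact SimpleGraph.Adj.reachable
          (show (G.induce (⋃ w ∈ g u, f w)).Adj ⟨s, mem a.2 hs⟩ ⟨t, mem b.2 ht⟩ from hst)
    obtain ⟨⟨w, hw⟩⟩ := (gc u).nonempty
    obtain ⟨⟨x, hx⟩⟩ := (fc w).nonempty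
    have : Nonempty ↥(⋃ w ∈ g u, f w) := ⟨⟨x, mem hw hx⟩⟩
    refine ⟨?_⟩
    rintro ⟨a, ha⟩ ⟨b, hb⟩
    obtain ⟨w₁, hw₁, ha'⟩ := Set.mem_iUnion₂.1 ha
    obtain ⟨w₂, hw₂, hb'⟩ := Set.mem_iUnion₂.1 hb
    obtain ⟨p⟩ := (gc u).preconnected ⟨w₁, hw₁⟩ ⟨w₂, hw₂⟩
    exact key p ha' hb'
  · refine Set.disjoint_left.2 fun a ha hb => ?_
    obtain ⟨w₁, hw₁, ha'⟩ := Set.mem_iUnion₂.1 ha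
    obtain ⟨w₂, hw₂, hb'⟩ := Set.mem_iUnion₂.1 hb
    have hne : w₁ ≠ w₂ := by
      rintro rfl
      exact Set.disjoint_left.1 (gd hu) hw₁ hw₂
    exact Set.disjoint_left.1 (fd hne) ha' hb'
  · obtain ⟨a, ha, b, hb, hab⟩ := ga u₁ u₂ hu
    obtain ⟨s, hs, t, ht, hst⟩ := fa a b hab
    exact ⟨s, mem ha hs, t, mem hb ht, hst⟩

theorem of_induce (s : Set V) : GraphMinor (G.induce s) G :=
  ⟨fun v => {(v : V)}, fun v => connected_induce_singleton _,
    fun v w h => by simpa [Subtype.ext_iff] using h, fun v w h => ⟨v, rfl, w, rfl, h⟩⟩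

/-- Merging `b` into its neighbour `a` yields a minor. -/
theorem of_contract {a b : V} (hab : G.Adj a b) :
    GraphMinor ((G.joinNeighbors a b).induce ({b}ᶜ : Set V)) G := by
  classical
  refine ⟨fun v => if (v : V) = a then {a, b} else {(v : V)}, fun v => ?_, ?_, ?_⟩
  · dsimp only
    by_cases h : (v : V) = a
    · rw [if_pos h]
      exact SimpleGraph.induce_pair_connected_of_adj hab
    · rw [if_neg h]
      exact connected_induce_singleton _
  · rintro ⟨v, hv⟩ ⟨w, hw⟩ hne
    have hne' : v ≠ w := fun h => hne (Subtype.ext h)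
    simp only [Set.mem_compl_iff, Set.mem_singleton_iff] at hv hw
    refine Set.disjoint_left.2 fun x hx hy => ?_
    dsimp only at hx hy
    split_ifs at hx hy <;> simp at hx hy <;> grind
  · have sub : ∀ v : V, v ∈ (if v = a then {a, b} else {v} : Set V) := by
      intro v; split_ifs with h <;> simp [h]
    have hb : b ∈ (if a = a then {a, b} else {a} : Set V) := by simp
    rintro ⟨v, hv⟩ ⟨w, hw⟩ h
    simp only [SimpleGraph.joinNeighbors, SimpleGraph.comap_adj, SimpleGraph.sup_adj,
      SimpleGraph.fromEdgeSet_adj, Function.Embedding.subtype_apply, Set.mem_image,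
      SimpleGraph.mem_neighborSet] at h
    rcases h with h | ⟨⟨x, hx, he⟩, hne⟩
    · exact ⟨v, sub v, w, sub w, h⟩
    · rcases Sym2.eq_iff.1 he with ⟨rfl, rfl⟩ | ⟨rfl, rfl⟩
      · exact ⟨b, hb, x, sub x, hx⟩
      · exact ⟨x, sub x, b, hb, hx.symm⟩

/-- Five pairwise disjoint connected sets with edges between any two form a `K₅` minor. -/
theorem top_five (A : Fin 5 → Set V) (hc : ∀ i, (G.induce (A i)).Connected)
    (hd : ∀ i j, i < j → Disjoint (A i) (A j))
    (ha : ∀ i j, i < j → ∃ u ∈ A i, ∃ v ∈ A j, G.Adj u v) :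
    GraphMinor (⊤ : SimpleGraph (Fin 5)) G := by
  refine ⟨A, hc, fun i j hij => ?_, fun i j hij => ?_⟩
  · rcases lt_or_gt_of_ne hij with h | h
    · exact hd i j h
    · exact (hd j i h).symm
  · rcases lt_or_gt_of_ne hij.ne with h | h
    · exact ha i j h
    · obtain ⟨u, hu, v, hv, huv⟩ := ha j i h
      exact ⟨v, hv, u, hu, huv.symm⟩

theorem top_five_of_clique {v₀ v₁ v₂ v₃ v₄ : V} (h₀₁ : G.Adj v₀ v₁) (h₀₂ : G.Adj v₀ v₂)
    (h₀₃ : G.Adj v₀ v₃) (h₀₄ : G.Adj v₀ v₄) (h₁₂ : G.Adj v₁ v₂) (h₁₃ : G.Adj v₁ v₃)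
    (h₁₄ : G.Adj v₁ v₄) (h₂₃ : G.Adj v₂ v₃) (h₂₄ : G.Adj v₂ v₄) (h₃₄ : G.Adj v₃ v₄) :
    GraphMinor (⊤ : SimpleGraph (Fin 5)) G := by
  refine top_five ![{v₀}, {v₁}, {v₂}, {v₃}, {v₄}] ?_ ?_ ?_
  · simp [Fin.forall_fin_succ]
  · simp [Fin.forall_fin_succ, Ne.symm, h₀₁.ne, h₀₂.ne, h₀₃.ne, h₀₄.ne, h₁₂.ne, h₁₃.ne, h₁₄.ne,
      h₂₃.ne, h₂₄.ne, h₃₄.ne]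
  · simp [Fin.forall_fin_succ, *]

theorem top_five_of_wheel {v x a b c d : V} (hvx : G.Adj v x) (hva : G.Adj v a) (hvb : G.Adj v b)
    (hvc : G.Adj v c) (hvd : G.Adj v d) (hxa : G.Adj x a) (hxb : G.Adj x b) (hxd : G.Adj x d)
    (hxc : x ≠ c) (hac : G.Adj a c) (hcb : G.Adj c b) (had : G.Adj a d) (hbd : G.Adj b d)
    (hab : a ≠ b) (hcd : c ≠ d) :
    GraphMinor (⊤ : SimpleGraph (Fin 5)) G := by
  refine top_five ![{v}, {x}, {a, c}, {b}, {d}] ?_ ?_ ?_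
  · simp [Fin.forall_fin_succ,
      SimpleGraph.induce_pair_connected_of_adj hac]
  · simp [Fin.forall_fin_succ, hvx.ne, hva.ne, hvb.ne, hvc.ne, hvd.ne, hxa.ne, hxb.ne, hxd.ne, hxc,
      hcb.ne', had.ne', hbd.ne, hab.symm, hcd.symm, eq_comm]
  · simp [Fin.forall_fin_succ, *]

end GraphMinor

open Classical in
theorem SimpleGraph.card_edgeFinset_le_contract {W : Type*} [Fintype W] (H : SimpleGraph W)
    {a b : W} (hab : H.Adj a b) :
    H.edgeFinset.card ≤ ((H.joinNeighbors a b).induce ({b}ᶜ : Set W)).edgeFinset.card + 1 +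
      (H.neighborFinset a ∩ H.neighborFinset b).card := by
  set H' := H.joinNeighbors a b with hH'
  rw [SimpleGraph.card_edgeFinset_induce_compl_singleton,
    SimpleGraph.card_edgeFinset_deleteIncidenceSet]
  have hadj : ∀ x y, H'.Adj x y ↔
      H.Adj x y ∨ (∃ z, H.Adj b z ∧ s(a, z) = s(x, y)) ∧ x ≠ y := by
    intro x y
    simp [hH', SimpleGraph.joinNeighbors]
  have hdeg : H'.degree b = H.degree b := by
    unfold SimpleGraph.degree
    congr 1
    ext y
    rw [SimpleGraph.mem_neighborFinset, SimpleGraph.mem_neighborFinset, hadj]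
    refine ⟨?_, Or.inl⟩
    rintro (h | ⟨⟨z, hz, he⟩, hne⟩)
    · exact h
    · rcases Sym2.eq_iff.1 he with ⟨rfl, rfl⟩ | ⟨rfl, rfl⟩
      · exact hz
      · exact absurd rfl hz.ne
  set N := ((H.neighborFinset b).erase a) \ H.neighborFinset a with hN
  have hNcard : H.degree b ≤ N.card + 1 + (H.neighborFinset a ∩ H.neighborFinset b).card := by
    rw [← SimpleGraph.card_neighborFinset_eq_degree]
    have : H.neighborFinset b ⊆
        insert a N ∪ (H.neighborFinset a ∩ H.neighborFinset b) := by
      intro x hx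
      simp only [hN, Finset.mem_union, Finset.mem_insert, Finset.mem_sdiff, Finset.mem_erase,
        Finset.mem_inter]
      tauto
    refine (Finset.card_le_card this).trans ((Finset.card_union_le _ _).trans ?_)
    gcongr
    exact Finset.card_insert_le _ _
  have hE : H.edgeFinset.card + N.card ≤ H'.edgeFinset.card := by
    have hinj : Function.Injective fun x : W => s(a, x) := fun x y h =>
      Sym2.congr_right.1 h
    rw [← Finset.card_image_of_injective N hinj, ← Finset.card_union_of_disjoint]
    · refine Finset.card_le_card (Finset.union_subset ?_ ?_)
      · exact SimpleGraph.edgeFinset_mono le_sup_left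
      · intro e he
        obtain ⟨x, hx, rfl⟩ := Finset.mem_image.1 he
        simp only [hN, Finset.mem_sdiff, Finset.mem_erase, SimpleGraph.mem_neighborFinset] at hx
        rw [SimpleGraph.mem_edgeFinset, SimpleGraph.mem_edgeSet, hadj]
        exact Or.inr ⟨⟨x, hx.1.2, rfl⟩, hx.1.1.symm⟩
    · refine Finset.disjoint_left.2 fun e he he' => ?_
      obtain ⟨x, hx, rfl⟩ := Finset.mem_image.1 he'
      simp only [hN, Finset.mem_sdiff, SimpleGraph.mem_neighborFinset] at hx
      exact hx.2 (by simpa using he)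
  have := (SimpleGraph.degree_pos_iff_exists_adj _ _).2 ⟨a, hab.symm⟩
  omega

open Classical in
/-- A vertex of degree at most five all of whose edges lie in at least three triangles gives
rise to a `K₅` minor. -/
theorem GraphMinor.top_five_of_degree_le {W : Type*} [Fintype W] {H : SimpleGraph W} {v : W}
    (hpos : 0 < H.degree v) (hdeg : H.degree v ≤ 5)
    (htri : ∀ x, H.Adj v x → 3 ≤ (H.neighborFinset x ∩ H.neighborFinset v).card) :
    GraphMinor (⊤ : SimpleGraph (Fin 5)) H := by
  obtain ⟨y, hy⟩ := (SimpleGraph.degree_pos_iff_exists_adj _ _).1 hpos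
  set N := H.neighborFinset v with hN
  have hNv : ∀ x ∈ N, H.Adj v x := fun x hx => by simpa [hN] using hx
  have hcard : N.card = H.degree v := SimpleGraph.card_neighborFinset_eq_degree _ _
  have hnon : ∀ x ∈ N, (N.filter fun z => z ≠ x ∧ ¬ H.Adj x z).card + 4 ≤ N.card := by
    intro x hx
    have h1 := htri x (hNv x hx)
    have h2 : insert x ((N.filter fun z => z ≠ x ∧ ¬ H.Adj x z) ∪
        (H.neighborFinset x ∩ N)) ⊆ N := by
      intro z hz
      simp only [Finset.mem_insert, Finset.mem_union, Finset.mem_filter, Finset.mem_inter] at hz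
      rcases hz with rfl | hz | hz
      exacts [hx, hz.1, hz.2]
    have h3 := Finset.card_le_card h2
    rw [Finset.card_insert_of_notMem (by simp), Finset.card_union_of_disjoint] at h3
    · omega
    · refine Finset.disjoint_left.2 fun z hz hz' => ?_
      simp at hz hz'
      exact hz.2.2 hz'.1
  have hle := hnon y (by simpa [hN] using hy)
  have h45 : N.card = 4 ∨ N.card = 5 := by omega
  rcases h45 with h4 | h5
  · have hadj : ∀ x ∈ N, ∀ z ∈ N, x ≠ z → H.Adj x z := by
      intro x hx z hz hxz
      by_contra hn
      have h0 : (N.filter fun z => z ≠ x ∧ ¬ H.Adj x z).card = 0 := by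
        have := hnon x hx
        omega
      have : z ∈ N.filter fun z => z ≠ x ∧ ¬ H.Adj x z := by simp [hz, hxz.symm, hn]
      simp [Finset.card_eq_zero.1 h0] at this
    obtain ⟨p, q, r, s, hpq, hpr, hps, hqr, hqs, hrs, hNe⟩ := Finset.card_eq_four.1 h4
    have hp : p ∈ N := by simp [hNe]
    have hq : q ∈ N := by simp [hNe]
    have hr : r ∈ N := by simp [hNe]
    have hs : s ∈ N := by simp [hNe]
    exact top_five_of_clique (hNv p hp) (hNv q hq) (hNv r hr) (hNv s hs) (hadj p hp q hq hpq)
      (hadj p hp r hr hpr) (hadj p hp s hs hps) (hadj q hq r hr hqr) (hadj q hq s hs hqs)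
      (hadj r hr s hs hrs)
  · have huniq : ∀ x ∈ N, ∀ z ∈ N, ∀ z' ∈ N, x ≠ z → x ≠ z' → z ≠ z' →
        ¬ H.Adj x z → H.Adj x z' := by
      intro x hx z hz z' hz' hxz hxz' hzz hn
      by_contra hn'
      have h1 : (N.filter fun z => z ≠ x ∧ ¬ H.Adj x z).card ≤ 1 := by
        have := hnon x hx
        omega
      exact hzz (Finset.card_le_one.1 h1 z (by simp [hz, hxz.symm, hn]) z'
        (by simp [hz', hxz'.symm, hn']))
    have finish : ∀ x ∈ N, ∀ a ∈ N, ∀ b ∈ N, ∀ c ∈ N, ∀ d ∈ N, a ≠ b → c ≠ d → x ≠ c →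
        H.Adj x a → H.Adj x b → H.Adj x d → H.Adj a c → H.Adj c b → H.Adj a d → H.Adj b d →
        GraphMinor (⊤ : SimpleGraph (Fin 5)) H := by
      intro x hx a ha b hb c hc d hd hab hcd hxc h1 h2 h3 h4 h5 h6 h7
      -- all non-adjacent pairs are among `ab`, `cd`, `xc`
      exact top_five_of_wheel (hNv x hx) (hNv a ha) (hNv b hb) (hNv c hc) (hNv d hd)
        h1 h2 h3 hxc h4 h5 h6 h7 hab hcd
    have pair : ∀ a ∈ N, ∀ b ∈ N, a ≠ b → ∃ c ∈ N, ∃ d ∈ N, ∃ x ∈ N, c ≠ d ∧ c ≠ x ∧ d ≠ x ∧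
        a ≠ c ∧ a ≠ d ∧ a ≠ x ∧ b ≠ c ∧ b ≠ d ∧ b ≠ x := by
      intro a ha b hb hab
      have hc3 : ((N.erase a).erase b).card = 3 := by
        rw [Finset.card_erase_of_mem (by simp [hb, hab.symm]), Finset.card_erase_of_mem ha, h5]
      obtain ⟨c, d, x, hcd, hcx, hdx, he⟩ := Finset.card_eq_three.1 hc3
      have hmem : ∀ z ∈ ({c, d, x} : Finset W), z ≠ b ∧ z ≠ a ∧ z ∈ N := by
        intro z hz
        simpa [← he] using hz
      have hc := hmem c (by simp)
      have hd := hmem d (by simp)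
      have hx := hmem x (by simp)
      exact ⟨c, hc.2.2, d, hd.2.2, x, hx.2.2, hcd, hcx, hdx, hc.2.1.symm, hd.2.1.symm,
        hx.2.1.symm, hc.1.symm, hd.1.symm, hx.1.symm⟩
    by_cases hall : ∃ a ∈ N, ∃ b ∈ N, a ≠ b ∧ ¬ H.Adj a b
    · obtain ⟨a, ha, b, hb, hab, hnab⟩ := hall
      obtain ⟨c, hc, d, hd, x, hx, hcd, hcx, hdx, hac, had, hax, hbc, hbd, hbx⟩ :=
        pair a ha b hb hab
      have Aac := huniq a ha b hb c hc hab hac hbc hnab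
      have Aad := huniq a ha b hb d hd hab had hbd hnab
      have Aax := huniq a ha b hb x hx hab hax hbx hnab
      have hnba : ¬ H.Adj b a := fun h => hnab h.symm
      have Abc := huniq b hb a ha c hc hab.symm hbc hac hnba
      have Abd := huniq b hb a ha d hd hab.symm hbd had hnba
      have Abx := huniq b hb a ha x hx hab.symm hbx hax hnba
      by_cases hxd : H.Adj x d
      · exact finish x hx a ha b hb c hc d hd hab hcd hcx.symm Aax.symm Abx.symm hxd Aac
          Abc.symm Aad Abd
      · have Axc := huniq x hx d hd c hc hdx.symm hcx.symm hcd.symm hxd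
        exact finish x hx a ha b hb d hd c hc hab hcd.symm hdx.symm Aax.symm Abx.symm Axc Aad
          Abd.symm Aac Abc
    · push Not at hall
      obtain ⟨p, q, hpN, hqN, hpq⟩ := Finset.one_lt_card_iff.1 (show 1 < N.card by omega)
      obtain ⟨c, hc, d, hd, x, hx, hcd, hcx, hdx, hac, had, hax, hbc, hbd, hbx⟩ :=
        pair p hpN q hqN hpq
      exact finish x hx p hpN q hqN c hc d hd hpq hcd hcx.symm (hall _ hx _ hpN hax.symm)
        (hall _ hx _ hqN hbx.symm) (hall _ hx _ hd hdx.symm) (hall _ hpN _ hc hac)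
        (hall _ hc _ hqN hbc.symm) (hall _ hpN _ hd had) (hall _ hqN _ hd hbd)

open Classical in
/-- A nonempty graph without `K₅` minor on `n` vertices has at most `3n - 2` edges. -/
theorem card_edgeFinset_add_two_le_of_not_graphMinor {W : Type*} [Fintype W] [Nonempty W]
    (H : SimpleGraph W) (hH : ¬ GraphMinor (⊤ : SimpleGraph (Fin 5)) H) :
    H.edgeFinset.card + 2 ≤ 3 * Fintype.card W := by
  induction hn : Fintype.card W using Nat.strong_induction_on generalizing W with
  | _ n ih =>
  by_contra! hlt
  have hnpos : 0 < n := hn ▸ Fintype.card_pos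
  obtain ⟨S, hS, hScard⟩ := Finset.exists_subset_card_eq (s := H.edgeFinset) (n := 3 * n - 1)
    (by omega)
  have hSdiag : ∀ e ∈ S, ¬ e.IsDiag := fun e he =>
    H.not_isDiag_of_mem_edgeFinset (hS he)
  obtain ⟨J, hJ⟩ : ∃ J, J = SimpleGraph.fromEdgeSet (S : Set (Sym2 W)) := ⟨_, rfl⟩
  have hJS : J.edgeFinset = S := by
    ext e
    simp only [SimpleGraph.mem_edgeFinset, hJ, SimpleGraph.edgeSet_fromEdgeSet]
    exact ⟨fun h => h.1, fun h => ⟨h, hSdiag e h⟩⟩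
  have hJcard : J.edgeFinset.card = 3 * n - 1 := by rw [hJS, hScard]
  have hJH : J ≤ H := by
    rw [← SimpleGraph.edgeFinset_subset_edgeFinset, hJS]
    exact hS
  have hJm : ¬ GraphMinor (⊤ : SimpleGraph (Fin 5)) J := fun h =>
    hH (h.trans (GraphMinor.mono_left hJH (GraphMinor.refl H)))
  -- deleting or contracting an edge at `b`
  have step : ∀ (b : W) (J' : SimpleGraph ({b}ᶜ : Set W)) [Fintype J'.edgeSet],
      GraphMinor J' J →
      J'.edgeFinset.card + 3 < J.edgeFinset.card := by
    intro b J' _ hJ'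
    have hc : Fintype.card ({b}ᶜ : Set W) = n - 1 := by
      rw [Fintype.card_compl_set, hn]
      simp
    have hn2 : 2 ≤ n := by
      by_contra h1
      have h1 : n = 1 := by omega
      have : Subsingleton W := Fintype.card_le_one_iff_subsingleton.1 (by omega)
      have h2 : J.edgeFinset.card ≤ 0 := by
        rw [Nat.le_zero, Finset.card_eq_zero, SimpleGraph.edgeFinset_eq_empty]
        exact Subsingleton.elim _ _
      omega
    have : Nonempty ({b}ᶜ : Set W) := Fintype.card_pos_iff.1 (by omega)
    have : J'.edgeFinset.card + 2 ≤ 3 * (n - 1) := by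
      convert ih (n - 1) (by omega) J' (fun h => hJm (h.trans hJ')) hc
    omega
  have hsum : ∃ v, J.degree v ≤ 5 := by
    by_contra! h
    have h1 := J.sum_degrees_eq_twice_card_edges
    have h2 : ∑ _v : W, 6 ≤ ∑ v, J.degree v := Finset.sum_le_sum fun v _ => h v
    simp only [Finset.sum_const, Finset.card_univ, hn, smul_eq_mul] at h2
    omega
  obtain ⟨v, hv⟩ := hsum
  refine hJm (GraphMinor.top_five_of_degree_le (v := v) ?_ hv fun x hx => ?_)
  · by_contra h0
    have h1 := step v _ (GraphMinor.of_induce _)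
    rw [SimpleGraph.card_edgeFinset_induce_compl_singleton,
      SimpleGraph.card_edgeFinset_deleteIncidenceSet] at h1
    omega
  · have h1 := J.card_edgeFinset_le_contract hx.symm
    have h2 := step v _ (GraphMinor.of_contract hx.symm)
    omega

open Classical in
theorem card_adj_le_of_not_graphMinor {W : Type*} [Fintype W]
    (H : SimpleGraph W) (hH : ¬ GraphMinor (⊤ : SimpleGraph (Fin 5)) H) :
    (Finset.univ.filter fun p : W × W => H.Adj p.1 p.2).card ≤ 6 * Fintype.card W := by
  have h1 : (Finset.univ.filter fun p : W × W => H.Adj p.1 p.2).card = ∑ v, H.degree v := by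
    rw [Finset.card_filter, Fintype.sum_prod_type]
    refine Finset.sum_congr rfl fun v _ => ?_
    rw [← Finset.card_filter, ← SimpleGraph.card_neighborFinset_eq_degree]
    congr 1
    ext x
    simp
  rw [h1, SimpleGraph.sum_degrees_eq_twice_card_edges]
  rcases isEmpty_or_nonempty W with h | h
  · simp [← SimpleGraph.sum_degrees_eq_twice_card_edges]
  · have := card_edgeFinset_add_two_le_of_not_graphMinor H hH
    omega

section BallGraph

variable {V ι : Type*} (G : SimpleGraph V) (c : ι → V) (ρ : ι → ℝ)

/-- The cell of `i` in the additively weighted Voronoi diagram with centres `c` and weights `ρ`. -/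
def SimpleGraph.powerCell (i : ι) : Set V :=
  {u | G.Reachable (c i) u ∧ ∀ j, j ≠ i → G.Reachable (c j) u →
    (G.dist (c i) u : ℝ) - ρ i < G.dist (c j) u - ρ j}

variable {G c ρ}

theorem SimpleGraph.disjoint_powerCell {i j : ι} (hij : i ≠ j) :
    Disjoint (G.powerCell c ρ i) (G.powerCell c ρ j) :=
  Set.disjoint_left.2 fun _ hi hj =>
    lt_asymm (hi.2 j hij.symm hj.1) (hj.2 i hij hi.1)

/-- Every vertex other than `a` has a neighbour one step closer to `a`. -/
theorem SimpleGraph.Reachable.exists_adj_dist_eq {a u : V} (h : G.Reachable a u) (hne : u ≠ a) :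
    ∃ u', G.Adj u u' ∧ G.Reachable a u' ∧ G.dist a u = G.dist a u' + 1 := by
  obtain ⟨p, hp⟩ := h.symm.exists_walk_length_eq_dist
  cases p with
  | nil => exact absurd rfl hne
  | @cons _ u' _ huu' q =>
    refine ⟨u', huu', q.reachable.symm, ?_⟩
    rw [SimpleGraph.Walk.length_cons] at hp
    have h1 := SimpleGraph.dist_le q
    have h2 := huu'.reachable.dist_triangle_left a
    have h3 : G.dist u u' ≤ 1 := SimpleGraph.dist_le huu'.toWalk
    rw [G.dist_comm (u := a), G.dist_comm (u := a) (v := u')]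
    omega

theorem SimpleGraph.Adj.dist_le_dist_add_one {u u' : V} (h : G.Adj u u') (a : V) :
    (G.dist a u : ℝ) ≤ G.dist a u' + 1 := by
  have h1 := h.symm.reachable.dist_triangle_right a
  have h3 : G.dist u' u ≤ 1 := SimpleGraph.dist_le h.symm.toWalk
  exact_mod_cast h1.trans (by omega)

theorem SimpleGraph.connected_induce_powerCell {i : ι} (hi : c i ∈ G.powerCell c ρ i) :
    (G.induce (G.powerCell c ρ i)).Connected := by
  have key : ∀ n u (hu : u ∈ G.powerCell c ρ i), G.dist (c i) u = n →
      (G.induce (G.powerCell c ρ i)).Reachable ⟨c i, hi⟩ ⟨u, hu⟩ := by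
    intro n
    induction n with
    | zero =>
      intro u hu h0
      obtain rfl := hu.1.dist_eq_zero_iff.1 h0
      exact SimpleGraph.Reachable.refl _
    | succ n ih =>
      intro u hu hn
      have hne : u ≠ c i := by
        rintro rfl
        simp at hn
      obtain ⟨u', hadj, hr, hd⟩ := hu.1.exists_adj_dist_eq hne
      have hu' : u' ∈ G.powerCell c ρ i := by
        refine ⟨hr, fun j hj hjr => ?_⟩
        have h1 := hu.2 j hj (hjr.trans hadj.symm.reachable)
        have h2 := hadj.dist_le_dist_add_one (c j)
        rw [hd] at h1
        push_cast at h1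
        linarith
      refine (ih u' hu' (by omega)).trans (SimpleGraph.Adj.reachable ?_)
      exact hadj.symm
  have : Nonempty (G.powerCell c ρ i) := ⟨⟨_, hi⟩⟩
  exact ⟨fun x y => (key _ _ x.2 rfl).symm.trans (key _ _ y.2 rfl)⟩

/-- If `j` comes second at a vertex of the cell of `i`, the cells of `i` and `j` are adjacent. -/
theorem SimpleGraph.exists_adj_powerCell
    (hgen : ∀ i j u, (G.dist (c i) u : ℝ) - ρ i = G.dist (c j) u - ρ j → i = j)
    {i j : ι} (hij : i ≠ j) (hj : c j ∈ G.powerCell c ρ j) {v : V}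
    (hv : v ∈ G.powerCell c ρ i) (hr : G.Reachable (c j) v)
    (hlt : ∀ l, l ≠ i → l ≠ j → G.Reachable (c l) v →
      (G.dist (c j) v : ℝ) - ρ j < G.dist (c l) v - ρ l) :
    ∃ x ∈ G.powerCell c ρ i, ∃ y ∈ G.powerCell c ρ j, G.Adj x y := by
  induction hn : G.dist (c j) v generalizing v with
  | zero =>
    obtain rfl := hr.dist_eq_zero_iff.1 hn
    exact absurd hj (Set.disjoint_left.1 (SimpleGraph.disjoint_powerCell hij) hv)
  | succ n ih =>
    have hne : v ≠ c j := by
      rintro rfl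
      simp at hn
    obtain ⟨u, hadj, hru, hd⟩ := hr.exists_adj_dist_eq hne
    have hlt' : ∀ l, l ≠ i → l ≠ j → G.Reachable (c l) u →
        (G.dist (c j) u : ℝ) - ρ j < G.dist (c l) u - ρ l := by
      intro l hli hlj hl
      have h1 := hlt l hli hlj (hl.trans hadj.symm.reachable)
      have h2 := hadj.dist_le_dist_add_one (c l)
      rw [hd] at h1
      push_cast at h1
      linarith
    have hiu : G.Reachable (c i) u := hv.1.trans hadj.reachable
    rcases lt_trichotomy ((G.dist (c i) u : ℝ) - ρ i) (G.dist (c j) u - ρ j) with h | h | h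
    · refine ih (v := u) ⟨hiu, fun l hl hlu => ?_⟩ hru hlt' (by omega)
      by_cases hlj : l = j
      · rwa [hlj]
      · exact h.trans (hlt' l hl hlj hlu)
    · exact absurd (hgen _ _ _ h) hij
    · refine ⟨v, hv, u, ⟨hru, fun l hl hlu => ?_⟩, hadj⟩
      by_cases hli : l = i
      · rwa [hli]
      · exact hlt' l hli hl hlu

/-- For an antichain of balls, a graph in which adjacent balls have a common vertex that lies in
no other ball is a minor. -/
theorem graphMinor_of_exclusive_vertex [Finite ι] (r : ι → ℕ)
    (hanti : ∀ i j, G.gBall (c i) (r i) ⊆ G.gBall (c j) (r j) → i = j) (P : SimpleGraph ι)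
    (hP : ∀ i j, P.Adj i j → ∃ v, v ∈ G.gBall (c i) (r i) ∧ v ∈ G.gBall (c j) (r j) ∧
      ∀ l, v ∈ G.gBall (c l) (r l) → l = i ∨ l = j) :
    GraphMinor P G := by
  obtain ⟨ε, hε, hε0, hε1⟩ : ∃ ε : ι → ℝ, Function.Injective ε ∧ (∀ i, 0 ≤ ε i) ∧
      ∀ i, ε i < 1 := by
    have := Fintype.ofFinite ι
    let f := Fintype.equivFin ι
    refine ⟨fun i => (f i : ℝ) / Fintype.card ι, fun i j hij => ?_, fun i => by positivity,
      fun i => ?_⟩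
    · have hpos : (0 : ℝ) < Fintype.card ι := by exact_mod_cast Fintype.card_pos_iff.2 ⟨i⟩
      rw [div_left_inj' hpos.ne'] at hij
      exact f.injective (Fin.ext (by exact_mod_cast hij))
    · have hpos : (0 : ℝ) < Fintype.card ι := by exact_mod_cast Fintype.card_pos_iff.2 ⟨i⟩
      rw [div_lt_one hpos]
      exact_mod_cast (f i).2
  set ρ : ι → ℝ := fun i => r i + ε i with hρ
  have hgen : ∀ i j u, (G.dist (c i) u : ℝ) - ρ i = G.dist (c j) u - ρ j → i = j := by
    intro i j u h
    simp only [hρ] at h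
    have h1 : (((G.dist (c i) u : ℤ) - r i - (G.dist (c j) u - r j) : ℤ) : ℝ) = ε i - ε j := by
      push_cast
      linarith
    have h2 : ((G.dist (c i) u : ℤ) - r i - (G.dist (c j) u - r j) : ℤ) < 1 := by
      have : (((G.dist (c i) u : ℤ) - r i - (G.dist (c j) u - r j) : ℤ) : ℝ) < 1 := by
        rw [h1]
        linarith [hε0 j, hε1 i]
      exact_mod_cast this
    have h3 : -1 < ((G.dist (c i) u : ℤ) - r i - (G.dist (c j) u - r j) : ℤ) := by
      have : -1 < (((G.dist (c i) u : ℤ) - r i - (G.dist (c j) u - r j) : ℤ) : ℝ) := by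
        rw [h1]
        linarith [hε0 i, hε1 j]
      exact_mod_cast this
    have h4 : ((G.dist (c i) u : ℤ) - r i - (G.dist (c j) u - r j) : ℤ) = 0 := by omega
    rw [h4] at h1
    exact hε (by push_cast at h1; linarith)
  have hle : ∀ i u, u ∈ G.gBall (c i) (r i) → (G.dist (c i) u : ℝ) - ρ i ≤ 0 := by
    intro i u hu
    have : (G.dist (c i) u : ℝ) ≤ r i := by exact_mod_cast hu.2
    simp only [hρ]
    linarith [hε0 i]
  have hgt : ∀ i u, G.Reachable (c i) u → u ∉ G.gBall (c i) (r i) →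
      0 < (G.dist (c i) u : ℝ) - ρ i := by
    intro i u hr hu
    have h1 : r i + 1 ≤ G.dist (c i) u := by
      by_contra h
      exact hu ⟨hr, by omega⟩
    have : (r i : ℝ) + 1 ≤ G.dist (c i) u := by exact_mod_cast h1
    simp only [hρ]
    linarith [hε1 i]
  have hcentre : ∀ i, c i ∈ G.powerCell c ρ i := by
    refine fun i => ⟨SimpleGraph.Reachable.refl _, fun j hj hr => ?_⟩
    by_contra hcon
    refine hj (hanti i j fun u hu => ⟨hr.trans hu.1, ?_⟩).symm
    have h1 := hr.dist_triangle_left u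
    have h2 : G.dist (c j) (c i) + r i < r j + 1 := by
      have : (G.dist (c j) (c i) : ℝ) + r i < r j + 1 := by
        simp only [hρ, SimpleGraph.dist_self] at hcon
        push_cast at hcon
        linarith [hε0 i, hε1 j]
      exact_mod_cast this
    have h3 := hu.2
    omega
  refine ⟨G.powerCell c ρ, fun i => SimpleGraph.connected_induce_powerCell (hcentre i),
    fun i j hij => SimpleGraph.disjoint_powerCell hij, fun i j hij => ?_⟩
  obtain ⟨v, hvi, hvj, hv⟩ := hP i j hij
  have hother : ∀ l, l ≠ i → l ≠ j → G.Reachable (c l) v → 0 < (G.dist (c l) v : ℝ) - ρ l :=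
    fun l hli hlj hr => hgt l v hr fun h => (hv l h).elim hli hlj
  rcases lt_trichotomy ((G.dist (c i) v : ℝ) - ρ i) (G.dist (c j) v - ρ j) with h | h | h
  · refine SimpleGraph.exists_adj_powerCell hgen hij.ne (hcentre j) (v := v)
      ⟨hvi.1, fun l hl hr => ?_⟩ hvj.1 fun l hli hlj hr =>
        (hle j v hvj).trans_lt (hother l hli hlj hr)
    by_cases hlj : l = j
    · rwa [hlj]
    · exact (hle i v hvi).trans_lt (hother l hl hlj hr)
  · exact absurd (hgen _ _ _ h) hij.ne
  · obtain ⟨x, hx, y, hy, hxy⟩ := SimpleGraph.exists_adj_powerCell hgen hij.ne' (hcentre i) (v := v)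
      ⟨hvj.1, fun l hl hr => by
        by_cases hli : l = i
        · rwa [hli]
        · exact (hle j v hvj).trans_lt (hother l hli hl hr)⟩
      hvi.1 fun l hlj hli hr => (hle i v hvi).trans_lt (hother l hli hlj hr)
    exact ⟨y, hy, x, hx, hxy.symm⟩

end BallGraph

section RandomSampling

open Finset

open Classical in
/-- Sampling each `i` independently with probability `p i`, the probability that all of `A` and
nothing of `D` is sampled. -/
theorem sum_sampling_weight {α : Type*} [Fintype α] (p : α → ℝ) {A D : Finset α}
    (h : Disjoint A D) :
    ∑ S : Finset α, (if A ⊆ S ∧ Disjoint S D then (∏ i ∈ S, p i) * ∏ i ∈ Sᶜ, (1 - p i) else 0) =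
      (∏ i ∈ A, p i) * ∏ i ∈ D, (1 - p i) := by
  have key := prod_add (fun i => if i ∈ D then 0 else p i)
    (fun i => if i ∈ A then 0 else 1 - p i) (univ : Finset α)
  rw [powerset_univ] at key
  calc _ = ∑ S : Finset α, (∏ i ∈ S, if i ∈ D then 0 else p i) *
          ∏ i ∈ univ \ S, (if i ∈ A then 0 else 1 - p i) := by
        refine sum_congr rfl fun S _ => ?_
        split_ifs with hS
        · rw [← compl_eq_univ_sdiff]
          congr 1
          · exact prod_congr rfl fun i hi => (if_neg (disjoint_left.1 hS.2 hi)).symm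
          · exact prod_congr rfl fun i hi =>
              (if_neg fun hA => (mem_compl.1 hi) (hS.1 hA)).symm
        · rw [not_and_or] at hS
          rcases hS with hS | hS
          · obtain ⟨i, hi, hiS⟩ := not_subset.1 hS
            have h0 : ∏ i ∈ univ \ S, (if i ∈ A then 0 else 1 - p i) = 0 :=
              prod_eq_zero (mem_sdiff.2 ⟨mem_univ i, hiS⟩) (if_pos hi)
            rw [h0, mul_zero]
          · obtain ⟨i, hi, hiD⟩ := not_disjoint_iff.1 hS
            have h0 : ∏ i ∈ S, (if i ∈ D then 0 else p i) = 0 := prod_eq_zero hi (if_pos hiD)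
            rw [h0, zero_mul]
    _ = ∏ i, ((if i ∈ A then p i else 1) * (if i ∈ D then 1 - p i else 1)) := by
        rw [← key]
        refine prod_congr rfl fun i _ => ?_
        by_cases hA : i ∈ A
        · simp [hA, disjoint_left.1 h hA]
        · by_cases hD : i ∈ D <;> simp [hA, hD]
    _ = _ := by
        rw [prod_mul_distrib]
        simp

open Classical in
/-- If every subfamily `S` has at most `6 |S|` pairs with a common vertex in no other member of
`S`, the weighted number of intersecting pairs of a fractional matching is bounded. -/
theorem sum_intersecting_le {α V : Type*} [Fintype α] (B : α → Set V) (w : α → ℝ)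
    (hw : ∀ i, 0 ≤ w i) (hcover : ∀ v, ∑ i with v ∈ B i, w i ≤ 1)
    (hsparse : ∀ S : Finset α, #{q : α × α | (q.1 ∈ S ∧ q.2 ∈ S) ∧ q.1 ≠ q.2 ∧
      ∃ v, v ∈ B q.1 ∧ v ∈ B q.2 ∧ ∀ l ∈ S, v ∈ B l → l = q.1 ∨ l = q.2} ≤ 6 * #S) :
    ∑ q : α × α with q.1 ≠ q.2 ∧ ¬ Disjoint (B q.1) (B q.2), w q.1 * w q.2 ≤
      6 * Real.exp 1 * ∑ i, (1 - Real.exp (-w i)) := by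
  set p : α → ℝ := fun i => 1 - Real.exp (-w i) with hp
  set μ : Finset α → ℝ := fun S => (∏ i ∈ S, p i) * ∏ i ∈ Sᶜ, (1 - p i) with hμ
  have hp0 : ∀ i, 0 ≤ p i := fun i => by
    simp only [hp, sub_nonneg, Real.exp_le_one_iff]
    linarith [hw i]
  have hμ0 : ∀ S, 0 ≤ μ S := fun S =>
    mul_nonneg (prod_nonneg fun i _ => hp0 i)
      (prod_nonneg fun i _ => by simp only [hp, sub_sub_cancel]; positivity)
  have hpw : ∀ i, w i * Real.exp (-w i) ≤ p i := fun i => by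
    have h1 := Real.add_one_le_exp (w i)
    have h2 : Real.exp (w i) * Real.exp (-w i) = 1 := by rw [← Real.exp_add]; simp
    have h3 := mul_le_mul_of_nonneg_right h1 (Real.exp_pos (-w i)).le
    simp only [hp]
    linarith
  set X : Finset α → Finset (α × α) := fun S => {q : α × α | (q.1 ∈ S ∧ q.2 ∈ S) ∧ q.1 ≠ q.2 ∧
      ∃ v, v ∈ B q.1 ∧ v ∈ B q.2 ∧ ∀ l ∈ S, v ∈ B l → l = q.1 ∨ l = q.2} with hX
  have hpair : ∀ q : α × α, q.1 ≠ q.2 ∧ ¬ Disjoint (B q.1) (B q.2) →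
      w q.1 * w q.2 * Real.exp (-1) ≤ ∑ S : Finset α, if q ∈ X S then μ S else 0 := by
    rintro ⟨i, j⟩ ⟨hij, hdis⟩
    dsimp only at hij hdis ⊢
    obtain ⟨v, hvi, hvj⟩ := Set.not_disjoint_iff.1 hdis
    set D : Finset α := (univ.filter fun l => v ∈ B l) \ {i, j} with hD
    have hAD : Disjoint ({i, j} : Finset α) D := disjoint_sdiff
    have hsub : ({i, j} : Finset α) ⊆ univ.filter fun l => v ∈ B l := by
      intro l hl
      rcases mem_insert.1 hl with rfl | hl
      · simpa using hvi
      · rw [mem_singleton.1 hl]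
        simpa using hvj
    have hsum : w i + w j + ∑ l ∈ D, w l ≤ 1 := by
      rw [← sum_pair hij, add_comm, sum_sdiff hsub]
      exact hcover v
    calc w i * w j * Real.exp (-1)
        ≤ w i * w j * Real.exp (-(w i + w j + ∑ l ∈ D, w l)) := by
          have := mul_nonneg (hw i) (hw j)
          gcongr
      _ = (w i * Real.exp (-w i)) * (w j * Real.exp (-w j)) * ∏ l ∈ D, (1 - p l) := by
          simp only [hp, sub_sub_cancel]
          rw [← Real.exp_sum, sum_neg_distrib, neg_add, neg_add, Real.exp_add, Real.exp_add]
          ring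
      _ ≤ p i * p j * ∏ l ∈ D, (1 - p l) := by
          have h1 : 0 ≤ ∏ l ∈ D, (1 - p l) :=
            prod_nonneg fun i _ => by simp only [hp, sub_sub_cancel]; positivity
          exact mul_le_mul_of_nonneg_right (mul_le_mul (hpw i) (hpw j)
            (mul_nonneg (hw j) (Real.exp_pos _).le) (hp0 i)) h1
      _ = ∑ S : Finset α, if {i, j} ⊆ S ∧ Disjoint S D then μ S else 0 := by
          rw [sum_sampling_weight p hAD, prod_pair hij]
      _ ≤ ∑ S : Finset α, if (i, j) ∈ X S then μ S else 0 := by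
          refine sum_le_sum fun S _ => ?_
          by_cases hS : {i, j} ⊆ S ∧ Disjoint S D
          · have : (i, j) ∈ X S := by
              simp only [hX, mem_filter, mem_univ, true_and]
              refine ⟨⟨hS.1 (by simp), hS.1 (by simp)⟩, hij, v, hvi, hvj, fun l hl hvl => ?_⟩
              by_contra hne
              refine disjoint_left.1 hS.2 hl ?_
              rw [hD, mem_sdiff]
              simpa [hvl] using hne
            rw [if_pos hS, if_pos this]
          · rw [if_neg hS]
            split_ifs
            exacts [hμ0 S, le_rfl]
  have hcard : ∑ S : Finset α, μ S * #S = ∑ i, p i := by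
    calc ∑ S : Finset α, μ S * #S = ∑ S : Finset α, ∑ i, if i ∈ S then μ S else 0 := by
          refine sum_congr rfl fun S _ => ?_
          rw [← sum_filter, sum_const, nsmul_eq_mul, mul_comm]
          simp
      _ = ∑ i, ∑ S : Finset α, if i ∈ S then μ S else 0 := sum_comm
      _ = ∑ i, p i := by
          refine sum_congr rfl fun i _ => ?_
          simpa using sum_sampling_weight p (disjoint_empty_right {i})
  have hmain : (∑ q : α × α with q.1 ≠ q.2 ∧ ¬ Disjoint (B q.1) (B q.2), w q.1 * w q.2) *
      Real.exp (-1) ≤ 6 * ∑ i, p i := by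
    calc _ ≤ ∑ q : α × α with q.1 ≠ q.2 ∧ ¬ Disjoint (B q.1) (B q.2),
            ∑ S : Finset α, (if q ∈ X S then μ S else 0) := by
          rw [sum_mul]
          exact sum_le_sum fun q hq => hpair q (mem_filter.1 hq).2
      _ ≤ ∑ q : α × α, ∑ S : Finset α, (if q ∈ X S then μ S else 0) :=
          sum_le_sum_of_subset_of_nonneg (filter_subset _ _) fun q _ _ =>
            sum_nonneg fun S _ => by split_ifs; exacts [hμ0 S, le_rfl]
      _ = ∑ S : Finset α, μ S * #(X S) := by
          rw [sum_comm]
          refine sum_congr rfl fun S _ => ?_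
          rw [← sum_filter, sum_const, nsmul_eq_mul, mul_comm]
          simp
      _ ≤ ∑ S : Finset α, μ S * (6 * #S) := by
          refine sum_le_sum fun S _ => mul_le_mul_of_nonneg_left ?_ (hμ0 S)
          exact_mod_cast hsparse S
      _ = 6 * ∑ i, p i := by
          rw [← hcard, mul_sum]
          exact sum_congr rfl fun S _ => by ring
  have hexp : Real.exp (-1) * Real.exp 1 = 1 := by rw [← Real.exp_add]; simp
  have := mul_le_mul_of_nonneg_right hmain (Real.exp_pos 1).le
  rw [mul_assoc, hexp, mul_one] at this
  linarith

open Classical in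
/-- A weighted Turán theorem. -/
theorem exists_independent_sq_sum_le {α : Type*} (R : α → α → Prop) (hrefl : ∀ i, R i i)
    (hsymm : ∀ i j, R i j → R j i) (w : α → ℝ) (hw : ∀ i, 0 ≤ w i) (A : Finset α) :
    ∃ M ⊆ A, (∀ i ∈ M, ∀ j ∈ M, i ≠ j → ¬ R i j) ∧
      (∑ i ∈ A, w i) ^ 2 ≤ #M * ∑ i ∈ A, w i * ∑ j ∈ A with R i j, w j := by
  induction A using Finset.strongInduction with
  | H A ih =>
  rcases A.eq_empty_or_nonempty with rfl | hne
  · exact ⟨∅, by simp⟩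
  obtain ⟨e, heA, hmin⟩ := exists_min_image A (fun i => ∑ j ∈ A with R i j, w j) hne
  set A' := A.filter fun j => ¬ R e j with hA'
  set d := ∑ j ∈ A with R e j, w j with hd
  have hd0 : 0 ≤ d := sum_nonneg fun j _ => hw j
  have heA' : e ∉ A' := by simp [hA', hrefl]
  obtain ⟨M, hMA, hM, hsq⟩ := ih A' ⟨filter_subset _ _, fun h => heA' (h heA)⟩
  have heM : e ∉ M := fun h => heA' (hMA h)
  refine ⟨insert e M, ?_, ?_, ?_⟩
  · exact insert_subset heA (hMA.trans (filter_subset _ _))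
  · have hRe : ∀ j ∈ M, ¬ R e j := fun j hj => (mem_filter.1 (hMA hj)).2
    intro i hi j hj hij
    rcases mem_insert.1 hi with hie | hi' <;> rcases mem_insert.1 hj with hje | hj'
    · exact absurd (hie.trans hje.symm) hij
    · exact hie ▸ hRe j hj'
    · exact fun h => hRe i hi' (hje ▸ hsymm _ _ h)
    · exact hM i hi' j hj' hij
  rw [card_insert_of_notMem heM]
  set W' := ∑ i ∈ A', w i with hW'
  set Q' := ∑ i ∈ A', w i * ∑ j ∈ A' with R i j, w j with hQ'
  have hW : ∑ i ∈ A, w i = d + W' := (sum_filter_add_sum_filter_not A (R e) w).symm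
  have hW0 : 0 ≤ W' := sum_nonneg fun i _ => hw i
  have hQ0 : 0 ≤ Q' := sum_nonneg fun i _ => mul_nonneg (hw i) (sum_nonneg fun j _ => hw j)
  have hQ : d ^ 2 + Q' ≤ ∑ i ∈ A, w i * ∑ j ∈ A with R i j, w j := by
    rw [← sum_filter_add_sum_filter_not A (R e)]
    refine add_le_add ?_ ?_
    · rw [sq]
      nth_rewrite 1 [hd]
      rw [sum_mul]
      exact sum_le_sum fun i hi =>
        mul_le_mul_of_nonneg_left (hmin i (mem_filter.1 hi).1) (hw i)
    · refine sum_le_sum fun i _ => mul_le_mul_of_nonneg_left ?_ (hw i)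
      exact sum_le_sum_of_subset_of_nonneg
        (filter_subset_filter _ (filter_subset _ _)) fun j _ _ => hw j
  have hcs : 2 * d * W' ≤ Q' + #M * d ^ 2 := by
    rcases (Nat.cast_nonneg (α := ℝ) #M).eq_or_lt with h0 | hpos
    · rw [← h0, zero_mul] at hsq
      have : W' = 0 := by nlinarith
      rw [← h0, this]
      linarith
    · refine le_of_mul_le_mul_left ?_ hpos
      nlinarith [sq_nonneg (#M * d - W')]
  rw [hW]
  push_cast
  calc (d + W') ^ 2 ≤ (#M + 1) * (d ^ 2 + Q') := by nlinarith
    _ ≤ _ := by gcongr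

end RandomSampling

open Classical in
theorem card_le_matchingNumber {V : Type*} [Fintype V] {E : Set (Set V)} (M : Finset (Set V))
    (hME : ↑M ⊆ E) (hM : (M : Set (Set V)).Pairwise Disjoint) :
    M.card ≤ matchingNumber E := by
  refine le_csSup ⟨Fintype.card (Set V), ?_⟩ ⟨M, hME, hM, rfl⟩
  rintro n ⟨M, -, -, rfl⟩
  exact Finset.card_le_univ M

open Classical in
/-- Weights can be moved to the inclusion-minimal edges. -/
theorem IsFractionalMatching.exists_minimal {V : Type*} [Fintype V] {E : Set (Set V)}
    {w : Set V → ℝ} (hw : IsFractionalMatching E w) :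
    ∃ w' : {e // Minimal (· ∈ E) e} → ℝ, (∀ e, 0 ≤ w' e) ∧
      (∀ v, ∑ e with v ∈ e.1, w' e ≤ 1) ∧ ∑ e, w' e = ∑ e, w e := by
  obtain ⟨hw0, hwE, hwv⟩ := hw
  have hm : ∀ e : Set V, ∃ m, e ∈ E → m ⊆ e ∧ Minimal (· ∈ E) m := by
    intro e
    by_cases he : e ∈ E
    · obtain ⟨m, hme, hm⟩ := (Set.toFinite E).isPWO.exists_le_minimal he
      exact ⟨m, fun _ => ⟨hme, hm⟩⟩
    · exact ⟨e, fun h => absurd h he⟩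
  choose m hm using hm
  have hfib : ∀ e, ∑ f : {e // Minimal (· ∈ E) e}, (if m e = f.1 then w e else 0) = w e := by
    intro e
    by_cases he : e ∈ E
    · rw [Finset.sum_eq_single (⟨m e, (hm e he).2⟩ : {e // Minimal (· ∈ E) e})]
      · simp
      · intro f _ hf
        exact if_neg fun h => hf (Subtype.ext h.symm)
      · simp
    · simp [hwE e he]
  refine ⟨fun f => ∑ e, if m e = f.1 then w e else 0, fun f => ?_, fun v => ?_, ?_⟩
  · exact Finset.sum_nonneg fun e _ => by split_ifs; exacts [hw0 e, le_rfl]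
  · refine le_trans ?_ (hwv v)
    rw [Finset.sum_comm]
    refine Finset.sum_le_sum fun e _ => ?_
    by_cases hve : v ∈ e
    · rw [Set.indicator_of_mem (show e ∈ {e : Set V | v ∈ e} from hve)]
      refine le_of_le_of_eq (Finset.sum_le_sum_of_subset_of_nonneg (Finset.filter_subset _ _)
        fun f _ _ => ?_) (hfib e)
      split_ifs
      exacts [hw0 e, le_rfl]
    · rw [Set.indicator_of_notMem (show e ∉ {e : Set V | v ∈ e} from hve)]
      refine (Finset.sum_eq_zero fun f hf => ?_).le
      by_cases he : e ∈ E
      · refine if_neg fun h => hve ((hm e he).1 ?_)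
        rw [h]
        exact (Finset.mem_filter.1 hf).2
      · simp [hwE e he]
  · rw [Finset.sum_comm]
    exact Finset.sum_congr rfl fun e _ => hfib e

theorem sq_add_le_six_exp_mul {x : ℝ} (h1 : x ≤ 1) :
    x ^ 2 + 6 * Real.exp 1 * (1 - Real.exp (-x)) ≤ 6 * Real.exp 1 * x := by
  have h2 : (1 - x / 2) ^ 2 ≤ Real.exp (-x) := by
    have h3 : Real.exp (-x) = Real.exp (-(x / 2)) ^ 2 := by
      rw [← Real.exp_nat_mul]
      congr 1
      push_cast
      ring
    rw [h3]
    have := Real.add_one_le_exp (-(x / 2))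
    exact pow_le_pow_left₀ (by linarith) (by linarith) 2
  have h4 : 2 ≤ Real.exp 1 := by linarith [Real.add_one_le_exp (1 : ℝ)]
  have h5 : x ^ 2 / 4 ≤ x - (1 - Real.exp (-x)) := by nlinarith
  nlinarith [sq_nonneg x, mul_le_mul h4 h5 (by positivity) (by linarith)]

open Classical in
/-- Among any set of balls forming an antichain there are few pairs with an exclusive common
vertex. -/
theorem card_exclusive_pairs_le {V : Type*} {α : Type*} {G : SimpleGraph V}
    (hG : ¬ GraphMinor (⊤ : SimpleGraph (Fin 5)) G) [Fintype α] (B : α → Set V)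
    (hball : ∀ i, ∃ v r, B i = G.gBall v r) (hanti : ∀ i j, B i ⊆ B j → i = j) (S : Finset α) :
    (Finset.univ.filter fun q : α × α => (q.1 ∈ S ∧ q.2 ∈ S) ∧ q.1 ≠ q.2 ∧
      ∃ v, v ∈ B q.1 ∧ v ∈ B q.2 ∧ ∀ l ∈ S, v ∈ B l → l = q.1 ∨ l = q.2).card ≤ 6 * S.card := by
  choose c r hB using hball
  obtain ⟨P, hPadj⟩ : ∃ P : SimpleGraph S, ∀ i j, P.Adj i j ↔ i ≠ j ∧
      ∃ v, v ∈ B i ∧ v ∈ B j ∧ ∀ l ∈ S, v ∈ B l → l = i ∨ l = j :=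
    ⟨{  Adj := _
        symm := ⟨fun i j ⟨hne, v, hi, hj, hv⟩ =>
          ⟨hne.symm, v, hj, hi, fun l hl h => (hv l hl h).symm⟩⟩
        loopless := ⟨fun i h => h.1 rfl⟩ }, fun i j => Iff.rfl⟩
  have hP : GraphMinor P G := by
    refine graphMinor_of_exclusive_vertex (c := fun i : S => c i) (fun i => r i)
      (fun i j hij => ?_) P ?_
    · rw [← hB, ← hB] at hij
      exact Subtype.ext (hanti _ _ hij)
    · intro i j hij
      obtain ⟨-, v, hi, hj, hv⟩ := (hPadj i j).1 hij
      refine ⟨v, hB i ▸ hi, hB j ▸ hj, fun l hl => ?_⟩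
      rw [← hB] at hl
      simpa only [Subtype.ext_iff] using hv l l.2 hl
  have hle := card_adj_le_of_not_graphMinor P fun h => hG (h.trans hP)
  rw [Fintype.card_coe] at hle
  refine le_trans (le_trans (Finset.card_le_card fun q hq => ?_)
    (Finset.card_image_le (f := fun q : S × S => ((q.1 : α), (q.2 : α))))) hle
  obtain ⟨⟨h1, h2⟩, hne, hv⟩ := (Finset.mem_filter.1 hq).2
  refine Finset.mem_image.2 ⟨(⟨q.1, h1⟩, ⟨q.2, h2⟩), ?_, rfl⟩
  rw [Finset.mem_filter, hPadj]
  exact ⟨Finset.mem_univ _, fun h => hne (Subtype.ext_iff.1 h), hv⟩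

/-- For every planar graph `G` and every ball hypergraph `𝓗` of `G`, the fractional
matching number satisfies `ν*(𝓗) ≤ 6e·ν(𝓗)`: every fractional matching has total
weight at most `6e·ν(𝓗)`. -/
theorem nuStar_le_six_e_mul_nu_planar {V : Type} [Fintype V] (G : SimpleGraph V)
    (hG : IsPlanar G) (E : Set (Set V)) (hE : IsBallHypergraph G E)
    (w : Set V → ℝ) (hw : IsFractionalMatching E w) :
    ∑ e : Set V, w e ≤ 6 * Real.exp 1 * (matchingNumber E : ℝ) := by
  classical
  obtain ⟨w', hw'0, hw'v, hw'sum⟩ := hw.exists_minimal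
  rw [← hw'sum]
  have hball : ∀ e : {e // Minimal (· ∈ E) e}, ∃ v r, e.1 = G.gBall v r := fun e => hE _ e.2.prop
  have hanti : ∀ e f : {e // Minimal (· ∈ E) e}, e.1 ⊆ f.1 → e = f := fun e f hef =>
    Subtype.ext (f.2.eq_of_subset e.2.prop hef)
  have hw'1 : ∀ e, w' e ≤ 1 := by
    intro e
    obtain ⟨v, r, he⟩ := hball e
    have hv : v ∈ e.1 := by
      rw [he]
      exact ⟨SimpleGraph.Reachable.refl _, by simp⟩
    exact (Finset.single_le_sum (fun i _ => hw'0 i)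
      (Finset.mem_filter.2 ⟨Finset.mem_univ e, hv⟩)).trans (hw'v v)
  have hinter : ∑ q : {e // Minimal (· ∈ E) e} × {e // Minimal (· ∈ E) e} with
      q.1 ≠ q.2 ∧ ¬ Disjoint q.1.1 q.2.1, w' q.1 * w' q.2 ≤
        6 * Real.exp 1 * ∑ e, (1 - Real.exp (-w' e)) := by
    convert sum_intersecting_le (fun e : {e // Minimal (· ∈ E) e} => e.1) w' hw'0 hw'v
      (card_exclusive_pairs_le hG.1 _ hball hanti)
  obtain ⟨M, -, hM, hsq⟩ := exists_independent_sq_sum_le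
    (fun e f : {e // Minimal (· ∈ E) e} => e = f ∨ ¬ Disjoint e.1 f.1) (fun _ => Or.inl rfl)
    (fun _ _ h => h.imp Eq.symm fun h h' => h h'.symm) w' hw'0 Finset.univ
  have hQ : ∑ e, w' e * ∑ f with e = f ∨ ¬ Disjoint e.1 f.1, w' f ≤
      6 * Real.exp 1 * ∑ e, w' e := by
    have hsplit : ∑ e, w' e * ∑ f with e = f ∨ ¬ Disjoint e.1 f.1, w' f = ∑ e, w' e ^ 2 +
        ∑ q : {e // Minimal (· ∈ E) e} × {e // Minimal (· ∈ E) e} with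
          q.1 ≠ q.2 ∧ ¬ Disjoint q.1.1 q.2.1, w' q.1 * w' q.2 := by
      rw [Finset.sum_filter, Fintype.sum_prod_type, ← Finset.sum_add_distrib]
      refine Finset.sum_congr rfl fun e _ => ?_
      rw [Finset.sum_filter, Finset.mul_sum, ← Finset.add_sum_erase _ _ (Finset.mem_univ e),
        ← Finset.add_sum_erase _ (fun f => ite _ _ _) (Finset.mem_univ e)]
      simp only [true_or, if_true, ne_eq, not_true_eq_false, false_and, if_false, zero_add, sq]
      congr 1
      refine Finset.sum_congr rfl fun f hf => ?_
      have hne : e ≠ f := (Finset.ne_of_mem_erase hf).symm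
      simp [hne]
    rw [hsplit, Finset.mul_sum]
    refine (add_le_add le_rfl hinter).trans ?_
    rw [Finset.mul_sum, ← Finset.sum_add_distrib]
    exact Finset.sum_le_sum fun e _ => sq_add_le_six_exp_mul (hw'1 e)
  have hMcard : (M.card : ℝ) ≤ matchingNumber E := by
    rw [← Finset.card_image_of_injective M Subtype.val_injective]
    refine Nat.cast_le.2 (card_le_matchingNumber _ ?_ ?_)
    · intro e he
      obtain ⟨f, -, rfl⟩ := Finset.mem_image.1 he
      exact f.2.prop
    · intro e he f hf hef
      obtain ⟨e, he', rfl⟩ := Finset.mem_image.1 he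
      obtain ⟨f, hf', rfl⟩ := Finset.mem_image.1 hf
      have := hM e he' f hf' fun h => hef (congrArg _ h)
      tauto
  have h0 : 0 ≤ ∑ e, w' e := Finset.sum_nonneg fun e _ => hw'0 e
  rcases h0.eq_or_lt with h | hpos
  · rw [← h]
    positivity
  · refine le_of_mul_le_mul_right ?_ hpos
    calc (∑ e, w' e) * ∑ e, w' e = (∑ e, w' e) ^ 2 := (sq _).symm
      _ ≤ M.card * ∑ e, w' e * ∑ f with e = f ∨ ¬ Disjoint e.1 f.1, w' f := by convert hsq
      _ ≤ matchingNumber E * (6 * Real.exp 1 * ∑ e, w' e) := by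
        refine (mul_le_mul_of_nonneg_left hQ (Nat.cast_nonneg _)).trans ?_
        gcongr
      _ = 6 * Real.exp 1 * matchingNumber E * ∑ e, w' e := by ring
end

section
/- There is no function f : ℕ → ℕ such that τ(𝓗) ≤ f(ν(𝓗)) for every ball hypergraph 𝓗 of a subgraph of the strong product of two paths. More precisely, for every integer k ≥ 3 there exist a graph G that is a subgraph of the strong product of two paths and an integer ℓ ≥ 0 such that the ℓ-ball hypergraph 𝓗 of G consisting of all balls of radius ℓ in G satisfies ν(𝓗) = 1 and τ(𝓗) ≥ k/2. -/
/-- The strong product of two graphs: `(u₁,u₂)` is adjacent to `(v₁,v₂)` iff the two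
pairs are distinct and, for each coordinate, the entries are equal or adjacent. -/
def strongProd {α β : Type*} (G₁ : SimpleGraph α) (G₂ : SimpleGraph β) :
    SimpleGraph (α × β) :=
  SimpleGraph.fromRel fun x y =>
    (x.1 = y.1 ∨ G₁.Adj x.1 y.1) ∧ (x.2 = y.2 ∨ G₂.Adj x.2 y.2)

/-- `u` and `v` are joined by a walk of length at most `d`. -/
def SimpleGraph.Within {V : Type*} (G : SimpleGraph V) (u v : V) (d : ℕ) : Prop :=
  ∃ p : G.Walk u v, p.length ≤ d

namespace SimpleGraph.Within

variable {V : Type*} {G : SimpleGraph V} {u v w : V} {d e : ℕ}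

theorem refl (u : V) : G.Within u u d := ⟨.nil, by simp⟩

theorem trans (h : G.Within u v d) (h' : G.Within v w e) : G.Within u w (d + e) := by
  obtain ⟨p, hp⟩ := h
  obtain ⟨q, hq⟩ := h'
  exact ⟨p.append q, by rw [Walk.length_append]; omega⟩

theorem mono (h : G.Within u v d) (hde : d ≤ e) : G.Within u v e :=
  h.imp fun _ hp => hp.trans hde

theorem mem_gBall (h : G.Within u v d) : v ∈ G.gBall u d := by
  obtain ⟨p, hp⟩ := h
  exact ⟨⟨p⟩, (dist_le p).trans hp⟩

end SimpleGraph.Within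

theorem SimpleGraph.within_of_mem_gBall {V : Type*} {G : SimpleGraph V} {u v : V} {d : ℕ}
    (h : v ∈ G.gBall u d) : G.Within u v d := by
  obtain ⟨p, hp⟩ := h.1.exists_walk_length_eq_dist
  exact ⟨p, hp.trans_le h.2⟩

/-- The matching number of a nonempty family of pairwise intersecting sets is `1`. -/
theorem matchingNumber_eq_one {V : Type*} [Fintype V] {E : Set (Set V)} (hne : E.Nonempty)
    (hE : ∀ e ∈ E, ∀ e' ∈ E, (e ∩ e').Nonempty) : matchingNumber E = 1 := by
  have hle : ∀ n ∈ {n | ∃ M : Finset (Set V),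
      ↑M ⊆ E ∧ (M : Set (Set V)).Pairwise Disjoint ∧ M.card = n}, n ≤ 1 := by
    rintro n ⟨M, hM, hd, rfl⟩
    refine Finset.card_le_one.2 fun a ha b hb => ?_
    by_contra hab
    exact Set.not_disjoint_iff_nonempty_inter.2 (hE a (hM ha) b (hM hb)) (hd ha hb hab)
  obtain ⟨e, he⟩ := hne
  have hmem : 1 ∈ {n | ∃ M : Finset (Set V),
      ↑M ⊆ E ∧ (M : Set (Set V)).Pairwise Disjoint ∧ M.card = n} :=
    ⟨{e}, by simpa using he, by simp, by simp⟩
  exact le_antisymm (csSup_le ⟨1, hmem⟩ hle) (le_csSup ⟨1, hle⟩ hmem)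

/-- If every vertex lies in at most `c` members of an indexed family of edges, then the
transversal number is at least the size of the family divided by `c`. -/
theorem card_le_mul_transversalNumber {V ι : Type*} [Fintype V] [Fintype ι] {E : Set (Set V)}
    (hne : ∀ e ∈ E, e.Nonempty) (b : ι → Set V) (hb : ∀ i, b i ∈ E) (c : ℕ)
    (hc : ∀ v, ∃ s : Finset ι, s.card ≤ c ∧ ∀ i, v ∈ b i → i ∈ s) :
    Fintype.card ι ≤ c * transversalNumber E := by
  classical
  have hmem : transversalNumber E ∈
      {n | ∃ T : Finset V, (∀ e ∈ E, ∃ v ∈ T, v ∈ e) ∧ T.card = n} :=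
    Nat.sInf_mem ⟨_, Finset.univ, fun e he => by simpa using! hne e he, rfl⟩
  obtain ⟨T, hT, hcard⟩ := hmem
  choose f hf hfb using fun i => hT (b i) (hb i)
  rw [← hcard]
  refine Finset.card_le_mul_card_image_of_maps_to (s := Finset.univ) (f := f)
    (fun i _ => hf i) c fun v _ => ?_
  obtain ⟨s, hs, hsv⟩ := hc v
  refine (Finset.card_le_card fun i hi => ?_).trans hs
  obtain rfl := (Finset.mem_filter.1 hi).2
  exact hsv i (hfb i)

/-- The labelling `f'` arises from `f` by moving every label by at most one position. -/
def AdjacentShift {n : ℕ} {κ : Type*} (f f' : Fin n → κ) : Prop :=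
  ∃ s : Equiv.Perm (Fin n), (∀ x : Fin n, (x : ℕ) ≤ s x + 1 ∧ (s x : ℕ) ≤ x + 1) ∧ f = f' ∘ s

theorem AdjacentShift.refl {n : ℕ} {κ : Type*} (f : Fin n → κ) : AdjacentShift f f :=
  ⟨1, by simp, rfl⟩

theorem reflTransGen_adjacentShift_comp_perm {n : ℕ} {κ : Type*} (g : Fin n → κ)
    (σ : Equiv.Perm (Fin n)) : Relation.ReflTransGen AdjacentShift (g ∘ σ) g := by
  obtain _ | n := n
  · rw [Subsingleton.elim (g ∘ σ) g]
  have hσ : σ ∈ Submonoid.closure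
      (Set.range fun i : Fin n ↦ Equiv.swap i.castSucc i.succ) := by
    rw [Equiv.Perm.mclosure_swap_castSucc_succ]; trivial
  induction hσ using Submonoid.closure_induction generalizing g with
  | one => exact .refl
  | mul a b _ _ ha hb => exact (hb (g ∘ a)).trans (ha g)
  | mem s hs =>
    obtain ⟨i, rfl⟩ := hs
    refine .single ⟨_, fun x => ?_, rfl⟩
    dsimp only
    rw [Equiv.swap_apply_def]
    split_ifs with h₁ h₂
    · subst h₁; simp; omega
    · subst h₂; simp; omega
    · omega

theorem exists_shift_sequence {n : ℕ} {κ : Type*} {f g : Fin n → κ}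
    (h : Relation.ReflTransGen AdjacentShift f g) :
    ∃ (M : ℕ) (L : ℕ → Fin n → κ), L 0 = f ∧ L M = g ∧ ∀ t, AdjacentShift (L t) (L (t + 1)) := by
  induction h using Relation.ReflTransGen.head_induction_on with
  | refl => exact ⟨0, fun _ => g, rfl, rfl, fun _ => .refl g⟩
  | @head a c hac _ ih =>
    obtain ⟨M, L, h0, hM, hL⟩ := ih
    refine ⟨M + 1, fun t => Nat.casesOn t a L, rfl, hM, fun t => ?_⟩
    cases t with
    | zero => simpa [h0] using hac
    | succ t => exact hL t

theorem exists_word_with_all_pairs (k : ℕ) :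
    ∃ (n : ℕ) (g : Fin n → Fin k), ∀ i j, ∃ z z' : Fin n,
      (z' : ℕ) = z + 1 ∧ g z = i ∧ g z' = j := by
  refine ⟨k * k * 2, fun z => if z.modNat = (0 : Fin 2) then
    (finProdFinEquiv.symm z.divNat).1 else (finProdFinEquiv.symm z.divNat).2, fun i j => ?_⟩
  have key : ∀ (a : Fin (k * k)) (b : Fin 2), (finProdFinEquiv (a, b)).divNat = a ∧
      (finProdFinEquiv (a, b)).modNat = b := fun a b =>
    Prod.ext_iff.1 (finProdFinEquiv.symm_apply_apply (a, b))
  refine ⟨finProdFinEquiv (finProdFinEquiv (i, j), 0),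
    finProdFinEquiv (finProdFinEquiv (i, j), 1), ?_, ?_, ?_⟩
  · simp [finProdFinEquiv]; omega
  · simp only [key]; simp
  · simp only [key]; simp

/-- Rows `0, …, ℓ` of length `n`, the rows above `ℓ` being labelled by `Λ`: two vertices
that are adjacent in the king's graph are joined if they carry the same label or if one of
them lies in row `ℓ`. -/
def labelledGrid {n : ℕ} {κ : Type*} (ℓ : ℕ) (Λ : ℕ → Fin n → κ) :
    SimpleGraph (Fin (ℓ + 1) × Fin n) where
  Adj u v := u ≠ v ∧ ((u.1 : ℕ) ≤ v.1 + 1 ∧ (v.1 : ℕ) ≤ u.1 + 1) ∧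
    ((u.2 : ℕ) ≤ v.2 + 1 ∧ (v.2 : ℕ) ≤ u.2 + 1) ∧
    (Λ u.1 u.2 = Λ v.1 v.2 ∨ (u.1 : ℕ) = ℓ ∨ (v.1 : ℕ) = ℓ)
  symm := ⟨fun _ _ ⟨h₁, h₂, h₃, h₄⟩ => ⟨h₁.symm, h₂.symm, h₃.symm,
    h₄.imp Eq.symm Or.symm⟩⟩
  loopless := ⟨fun _ h => h.1 rfl⟩

section labelledGrid

variable {n ℓ : ℕ} {κ : Type*} {Λ : ℕ → Fin n → κ}

theorem labelledGrid_le_strongProd :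
    labelledGrid ℓ Λ ≤
      strongProd (SimpleGraph.pathGraph (ℓ + 1)) (SimpleGraph.pathGraph n) := by
  rintro u v ⟨hne, h₁, h₂, -⟩
  refine ⟨hne, .inl ⟨?_, ?_⟩⟩ <;> rw [SimpleGraph.pathGraph_adj, Fin.ext_iff] <;> omega

theorem labelledGrid_within_one {u v : Fin (ℓ + 1) × Fin n}
    (h₁ : (u.1 : ℕ) ≤ v.1 + 1 ∧ (v.1 : ℕ) ≤ u.1 + 1)
    (h₂ : (u.2 : ℕ) ≤ v.2 + 1 ∧ (v.2 : ℕ) ≤ u.2 + 1)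
    (h₃ : Λ u.1 u.2 = Λ v.1 v.2 ∨ (u.1 : ℕ) = ℓ ∨ (v.1 : ℕ) = ℓ) :
    (labelledGrid ℓ Λ).Within u v 1 := by
  by_cases h : u = v
  · exact h ▸ .refl u
  · have hadj : (labelledGrid ℓ Λ).Adj u v := ⟨h, h₁, h₂, h₃⟩
    exact ⟨hadj.toWalk, by simp⟩

theorem labelledGrid_within_last_row (d : ℕ) (a b : Fin n)
    (h : (a : ℕ) ≤ b + d ∧ (b : ℕ) ≤ a + d) :
    (labelledGrid ℓ Λ).Within (Fin.last ℓ, a) (Fin.last ℓ, b) d := by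
  induction d generalizing a with
  | zero =>
    obtain rfl : a = b := by omega
    exact .refl _
  | succ d ih =>
    obtain ⟨c, hc, hcb⟩ : ∃ c : Fin n, ((a : ℕ) ≤ c + 1 ∧ (c : ℕ) ≤ a + 1) ∧
        ((c : ℕ) ≤ b + d ∧ (b : ℕ) ≤ c + d) := by
      rcases lt_trichotomy (a : ℕ) b with hab | hab | hab
      · exact ⟨⟨a + 1, by omega⟩, by simp; omega, by simp; omega⟩
      · exact ⟨a, by omega, by omega⟩
      · exact ⟨⟨a - 1, by omega⟩, by simp; omega, by simp; omega⟩
    have h1 : (labelledGrid ℓ Λ).Within (Fin.last ℓ, a) (Fin.last ℓ, c) 1 :=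
      labelledGrid_within_one (by simp) hc (by simp)
    exact (h1.trans (ih c hcb)).mono (by omega)

theorem labelledGrid_exists_within_last_row
    (hΛ : ∀ y, y + 1 < ℓ → AdjacentShift (Λ y) (Λ (y + 1))) (d : ℕ)
    (v : Fin (ℓ + 1) × Fin n) (hd : (v.1 : ℕ) + d = ℓ) :
    ∃ a, (labelledGrid ℓ Λ).Within v (Fin.last ℓ, a) d := by
  induction d generalizing v with
  | zero =>
    obtain ⟨y, x⟩ := v
    obtain rfl : y = Fin.last ℓ := Fin.ext (by simpa using! hd)
    exact ⟨x, .refl _⟩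
  | succ d ih =>
    obtain ⟨y, x⟩ := v
    simp only at hd
    obtain ⟨x', h₂, h₃⟩ : ∃ x' : Fin n, ((x : ℕ) ≤ x' + 1 ∧ (x' : ℕ) ≤ x + 1) ∧
        (Λ y x = Λ (y + 1) x' ∨ (y : ℕ) = ℓ ∨ (y + 1 : ℕ) = ℓ) := by
      by_cases hy : (y + 1 : ℕ) < ℓ
      · obtain ⟨s, hs, hsy⟩ := hΛ y hy
        exact ⟨s x, hs x, .inl (by rw [hsy]; rfl)⟩
      · exact ⟨x, by omega, by omega⟩
    obtain ⟨a, ha⟩ := ih (⟨y + 1, by omega⟩, x') (by simp; omega)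
    have h1 : (labelledGrid ℓ Λ).Within (y, x) (⟨y + 1, by omega⟩, x') 1 :=
      labelledGrid_within_one (by simp; omega) h₂ h₃
    exact ⟨a, (h1.trans ha).mono (by omega)⟩

theorem labelledGrid_exists_within_of_row_le
    (hΛ : ∀ y, y + 1 < ℓ → AdjacentShift (Λ y) (Λ (y + 1))) (H t : ℕ) (ht : H + t < ℓ)
    (z : Fin n) :
    ∃ x, Λ H x = Λ (H + t) z ∧
      (labelledGrid ℓ Λ).Within (⟨H, by omega⟩, x) (⟨H + t, by omega⟩, z) t := by
  induction t generalizing z with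
  | zero => exact ⟨z, rfl, .refl _⟩
  | succ t ih =>
    obtain ⟨s, hs, hsy⟩ := hΛ (H + t) ht
    have hz : Λ (H + t) (s.symm z) = Λ (H + (t + 1)) z := by
      rw [hsy]; simp [add_assoc]
    obtain ⟨x, hx, hw⟩ := ih (by omega) (s.symm z)
    refine ⟨x, hx.trans hz, hw.trans (labelledGrid_within_one ?_ ?_ (.inl hz))⟩
    · simp; omega
    · simpa using hs (s.symm z)

theorem labelledGrid_within_of_monotone [PartialOrder κ] (hmono : Monotone (Λ 0)) {H : ℕ}
    (hH : H < ℓ) (hconst : ∀ y ≤ H, Λ y = Λ 0) (d y : ℕ) (hd : y + d = H) (x x' : Fin n)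
    (hx : (x : ℕ) ≤ x' + d ∧ (x' : ℕ) ≤ x + d) (hΛx : Λ 0 x = Λ 0 x') :
    (labelledGrid ℓ Λ).Within (⟨y, by omega⟩, x) (⟨H, by omega⟩, x') d := by
  induction d generalizing x y with
  | zero =>
    obtain rfl : x = x' := by omega
    obtain rfl : y = H := by omega
    exact .refl _
  | succ d ih =>
    obtain ⟨c, hc, hcx, hΛc⟩ : ∃ c : Fin n, ((x : ℕ) ≤ c + 1 ∧ (c : ℕ) ≤ x + 1) ∧
        ((c : ℕ) ≤ x' + d ∧ (x' : ℕ) ≤ c + d) ∧ Λ 0 x = Λ 0 c := by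
      rcases lt_trichotomy (x : ℕ) x' with h | h | h
      · refine ⟨⟨x + 1, by omega⟩, by simp; omega, by simp; omega, le_antisymm (hmono ?_) ?_⟩
        · simp [Fin.le_def]
        · rw [hΛx]; exact hmono (by simp [Fin.le_def]; omega)
      · exact ⟨x, by omega, by omega, rfl⟩
      · refine ⟨⟨x - 1, by omega⟩, by simp; omega, by simp; omega, le_antisymm ?_ (hmono ?_)⟩
        · rw [hΛx]; exact hmono (by simp [Fin.le_def]; omega)
        · simp [Fin.le_def]
    refine (SimpleGraph.Within.trans (d := 1)
      (labelledGrid_within_one (v := (⟨y + 1, by omega⟩, c)) ?_ hc (.inl ?_))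
      (ih (y + 1) (by omega) c hcx (hΛc.symm.trans hΛx))).mono (by omega)
    · simp; omega
    · simpa [hconst y (by omega), hconst (y + 1) (by omega)] using hΛc

/-- Balls of radius `ℓ` around row `0` stay among the vertices with the label of their
center, apart from vertices in row `ℓ` next to such a vertex. -/
theorem labelledGrid_label_of_walk {R : ℕ} {Λ : ℕ → Fin n → κ} {u v : Fin (R + 1 + 1) × Fin n}
    (hu : (u.1 : ℕ) = 0) (p : (labelledGrid (R + 1) Λ).Walk u v) (hp : p.length ≤ R + 1) :
    (v.1 : ℕ) ≤ p.length ∧ ((v.1 : ℕ) ≤ R → Λ v.1 v.2 = Λ 0 u.2) ∧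
      ((v.1 : ℕ) = R + 1 →
        ∃ x : Fin n, ((x : ℕ) ≤ v.2 + 1 ∧ (v.2 : ℕ) ≤ x + 1) ∧ Λ R x = Λ 0 u.2) := by
  induction p using SimpleGraph.Walk.concatRec with
  | Hnil => simp [hu]
  | @Hconcat u v w p h ih =>
    rw [SimpleGraph.Walk.length_concat] at hp ⊢
    obtain ⟨hle, hlab, -⟩ := ih hu (by omega)
    obtain ⟨-, h₁, h₂, h₃⟩ := h
    have hv := hlab (by omega)
    refine ⟨by omega, fun hw => ?_, fun hw => ⟨v.2, h₂, ?_⟩⟩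
    · rw [← hv]
      rcases h₃ with h₃ | h₃ | h₃
      · exact h₃.symm
      · omega
      · omega
    · rw [← hv, show (v.1 : ℕ) = R by omega]

theorem labelledGrid_labels_near {R : ℕ} [DecidableEq κ]
    {Λ : ℕ → Fin n → κ} (v : Fin (R + 1 + 1) × Fin n) :
    ∃ s : Finset κ, s.card ≤ 3 ∧ ∀ x, v ∈ (labelledGrid (R + 1) Λ).gBall (0, x) (R + 1) →
      Λ 0 x ∈ s := by
  by_cases hv : (v.1 : ℕ) ≤ R
  · refine ⟨{Λ v.1 v.2}, by simp, fun x hx => ?_⟩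
    obtain ⟨p, hp⟩ := SimpleGraph.within_of_mem_gBall hx
    simpa using ((labelledGrid_label_of_walk rfl p hp).2.1 hv).symm
  · refine ⟨{Λ R ⟨v.2 - 1, by omega⟩, Λ R v.2,
      if h : (v.2 : ℕ) + 1 < n then Λ R ⟨v.2 + 1, h⟩ else Λ R v.2},
      Finset.card_le_three, fun x hx => ?_⟩
    obtain ⟨p, hp⟩ := SimpleGraph.within_of_mem_gBall hx
    obtain ⟨x', hx', hlab⟩ := (labelledGrid_label_of_walk rfl p hp).2.2 (by omega)
    rw [← show Λ R x' = Λ 0 x from hlab]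
    rcases lt_trichotomy (x' : ℕ) v.2 with h | h | h
    · rw [show x' = ⟨v.2 - 1, by omega⟩ from Fin.ext (by simp; omega)]; simp
    · rw [show x' = v.2 from Fin.ext h]; simp
    · obtain h : x' = ⟨v.2 + 1, by omega⟩ := Fin.ext (by simp; omega)
      have : (v.2 : ℕ) + 1 < n := by omega
      simp [h, this]

theorem labelledGrid_balls_intersect {R : ℕ} [PartialOrder κ] {Λ : ℕ → Fin n → κ}
    (hΛ : ∀ y, y + 1 < R + 1 → AdjacentShift (Λ y) (Λ (y + 1))) (hmono : Monotone (Λ 0))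
    (hR : 2 * n ≤ R) (hconst : ∀ y ≤ 2 * n, Λ y = Λ 0)
    (hpairs : ∀ i j, ∃ z z' : Fin n, (z' : ℕ) = z + 1 ∧ Λ R z = i ∧ Λ R z' = j)
    (u v : Fin (R + 1 + 1) × Fin n) :
    ((labelledGrid (R + 1) Λ).gBall u (R + 1) ∩
      (labelledGrid (R + 1) Λ).gBall v (R + 1)).Nonempty := by
  have low : ∀ u v : Fin (R + 1 + 1) × Fin n, n ≤ u.1 →
      ((labelledGrid (R + 1) Λ).gBall u (R + 1) ∩
        (labelledGrid (R + 1) Λ).gBall v (R + 1)).Nonempty := by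
    intro u v hu
    obtain ⟨a, ha⟩ := labelledGrid_exists_within_last_row hΛ (R + 1 - u.1) u (by omega)
    obtain ⟨b, hb⟩ := labelledGrid_exists_within_last_row hΛ (R + 1 - v.1) v (by omega)
    exact ⟨(Fin.last _, b),
      ((ha.trans (labelledGrid_within_last_row n a b (by omega))).mono (by omega)).mem_gBall,
      (hb.mono (by omega)).mem_gBall⟩
  by_cases hu : n ≤ (u.1 : ℕ)
  · exact low u v hu
  by_cases hv : n ≤ (v.1 : ℕ)
  · rw [Set.inter_comm]; exact low v u hv
  have high : ∀ (u : Fin (R + 1 + 1) × Fin n) (z a : Fin n), (u.1 : ℕ) < n →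
      Λ R z = Λ 0 u.2 → ((z : ℕ) ≤ a + 1 ∧ (a : ℕ) ≤ z + 1) →
      (Fin.last (R + 1), a) ∈ (labelledGrid (R + 1) Λ).gBall u (R + 1) := by
    intro u z a hu hz hza
    obtain ⟨t, rfl⟩ := Nat.exists_eq_add_of_le hR
    obtain ⟨x, hx, hw⟩ := labelledGrid_exists_within_of_row_le hΛ (2 * n) t (by omega) z
    have h₁ := labelledGrid_within_of_monotone (ℓ := 2 * n + t + 1) hmono (H := 2 * n)
      (by omega) hconst (2 * n - u.1) u.1 (by omega) u.2 x (by omega)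
      (by rw [← hz, ← hx, hconst _ le_rfl])
    have h₂ : (labelledGrid (2 * n + t + 1) Λ).Within (⟨2 * n + t, by omega⟩, z)
        (Fin.last _, a) 1 :=
      labelledGrid_within_one (by simp; omega) hza (by simp)
    exact (((h₁.trans hw).trans h₂).mono (by omega)).mem_gBall
  obtain ⟨z, z', hzz', hz, hz'⟩ := hpairs (Λ 0 u.2) (Λ 0 v.2)
  exact ⟨(Fin.last _, z), high u z z (by omega) hz (by omega),
    high v z' z (by omega) hz' (by omega)⟩

end labelledGrid

theorem exists_subgraph_strongProd_paths (k : ℕ) (hk : 0 < k) :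
    ∃ (m₁ m₂ : ℕ) (G : SimpleGraph (Fin m₁ × Fin m₂)) (ℓ : ℕ),
      G ≤ strongProd (SimpleGraph.pathGraph m₁) (SimpleGraph.pathGraph m₂) ∧
      matchingNumber {e : Set (Fin m₁ × Fin m₂) | ∃ v, e = G.gBall v ℓ} = 1 ∧
      k ≤ 3 * transversalNumber {e : Set (Fin m₁ × Fin m₂) | ∃ v, e = G.gBall v ℓ} := by
  obtain ⟨n, g, hg⟩ := exists_word_with_all_pairs k
  obtain ⟨M, L, h0, hM, hL⟩ :=
    exists_shift_sequence (reflTransGen_adjacentShift_comp_perm g (Tuple.sort g))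
  let Λ : ℕ → Fin n → Fin k := fun y => L (y - 2 * n)
  have hconst : ∀ y ≤ 2 * n, Λ y = Λ 0 := fun y hy => by
    simp [Λ, Nat.sub_eq_zero_of_le hy]
  have hΛ : ∀ y, AdjacentShift (Λ y) (Λ (y + 1)) := fun y => by
    by_cases hy : y + 1 ≤ 2 * n
    · rw [hconst _ hy, hconst y (by omega)]; exact .refl _
    · simp only [Λ, show y + 1 - 2 * n = y - 2 * n + 1 by omega]; exact hL _
  have hmono : Monotone (Λ 0) := by
    simp only [Λ, Nat.zero_sub, h0]; exact Tuple.monotone_sort g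
  have hpairs : ∀ i j, ∃ z z' : Fin n, (z' : ℕ) = z + 1 ∧
      Λ (2 * n + M) z = i ∧ Λ (2 * n + M) z' = j := by
    simpa [Λ, hM] using! hg
  have hsurj : ∀ i, ∃ x, Λ 0 x = i := fun i => by
    obtain ⟨z, -, -, hz, -⟩ := hg i i
    exact ⟨(Tuple.sort g).symm z, by simpa [Λ, h0] using hz⟩
  choose c hc using hsurj
  refine ⟨2 * n + M + 1 + 1, n, labelledGrid (2 * n + M + 1) Λ, 2 * n + M + 1,
    labelledGrid_le_strongProd, matchingNumber_eq_one ⟨_, (0, c ⟨0, hk⟩), rfl⟩ ?_, ?_⟩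
  · rintro _ ⟨u, rfl⟩ _ ⟨v, rfl⟩
    exact labelledGrid_balls_intersect (fun y _ => hΛ y) hmono (by omega) hconst hpairs u v
  · have h := card_le_mul_transversalNumber
      (E := {e | ∃ v, e = (labelledGrid (2 * n + M + 1) Λ).gBall v (2 * n + M + 1)})
      (by rintro _ ⟨v, rfl⟩; exact ⟨v, (SimpleGraph.Within.refl v).mem_gBall⟩)
      (fun i : Fin k => (labelledGrid (2 * n + M + 1) Λ).gBall (0, c i) (2 * n + M + 1))
      (fun i => ⟨_, rfl⟩) 3 fun v => by
        obtain ⟨s, hs, hsv⟩ := labelledGrid_labels_near (Λ := Λ) v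
        exact ⟨s, hs, fun i hi => hc i ▸ hsv _ hi⟩
    simpa using h

/-- There is no function `f : ℕ → ℕ` such that `τ(𝓗) ≤ f(ν(𝓗))` for every ball
hypergraph `𝓗` of a subgraph of the strong product of two paths. More precisely, for
every integer `k ≥ 3` there are a subgraph `G` of the strong product of two paths and
an integer `ℓ ≥ 0` such that the `ℓ`-ball hypergraph `𝓗` of `G` consisting of all
balls of radius `ℓ` in `G` satisfies `ν(𝓗) = 1` and `τ(𝓗) ≥ k/2`. -/
theorem no_ErdosPosa_for_strong_products_of_paths :
    (¬ ∃ f : ℕ → ℕ,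
        ∀ (m₁ m₂ : ℕ) (G : SimpleGraph (Fin m₁ × Fin m₂)),
          G ≤ strongProd (SimpleGraph.pathGraph m₁) (SimpleGraph.pathGraph m₂) →
          ∀ E : Set (Set (Fin m₁ × Fin m₂)), IsBallHypergraph G E →
            transversalNumber E ≤ f (matchingNumber E)) ∧
    ∀ k : ℕ, 3 ≤ k →
      ∃ (m₁ m₂ : ℕ) (G : SimpleGraph (Fin m₁ × Fin m₂)) (ℓ : ℕ),
        G ≤ strongProd (SimpleGraph.pathGraph m₁) (SimpleGraph.pathGraph m₂) ∧
        matchingNumber {e : Set (Fin m₁ × Fin m₂) | ∃ v, e = G.gBall v ℓ} = 1 ∧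
        k ≤ 2 * transversalNumber {e : Set (Fin m₁ × Fin m₂) | ∃ v, e = G.gBall v ℓ} := by
  have main : ∀ k : ℕ, 3 ≤ k →
      ∃ (m₁ m₂ : ℕ) (G : SimpleGraph (Fin m₁ × Fin m₂)) (ℓ : ℕ),
        G ≤ strongProd (SimpleGraph.pathGraph m₁) (SimpleGraph.pathGraph m₂) ∧
        matchingNumber {e : Set (Fin m₁ × Fin m₂) | ∃ v, e = G.gBall v ℓ} = 1 ∧
        k ≤ 2 * transversalNumber {e : Set (Fin m₁ × Fin m₂) | ∃ v, e = G.gBall v ℓ} := by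
    intro k hk
    obtain ⟨m₁, m₂, G, ℓ, hG, hν, hτ⟩ := exists_subgraph_strongProd_paths (2 * k) (by omega)
    exact ⟨m₁, m₂, G, ℓ, hG, hν, by omega⟩
  refine ⟨?_, main⟩
  rintro ⟨f, hf⟩
  obtain ⟨m₁, m₂, G, ℓ, hG, hν, hτ⟩ := main (2 * f 1 + 3) (by omega)
  have h := hf m₁ m₂ G hG _ (fun e he => by
    obtain ⟨v, rfl⟩ := he
    exact ⟨v, ℓ, rfl⟩ : IsBallHypergraph G {e | ∃ v, e = G.gBall v ℓ})
  rw [hν] at h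
  omega
end
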